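/- Let G be a discrete polycyclic group and let T be an automorphism of G. Then Sub^c_G is closed in Sub_G, and the following statements are equivalent: (i) T acts distally on Sub^c_G; (ii) T acts distally on Sub^a_G; (iii) T acts distally on Sub_G; (iv) T^n = Id for some integer n ≥ 1. -/

import Mathlib

/-- The Chabauty topology on the space of subgroups of a discrete group `G`:
it is generated by the sub-basic sets `{H | H ∩ K = ∅}` for `K` finite (= compact in a
discrete group) and `{H | H ∩ U ≠ ∅}` for arbitrary `U` (= open in a discrete group). -/
instance chabautyTopology (G : Type*) [Group G] : TopologicalSpace (Subgroup G) :=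
  TopologicalSpace.generateFrom
    ({S | ∃ K : Set G, K.Finite ∧ S = {H : Subgroup G | (H : Set G) ∩ K = ∅}} ∪
     {S | ∃ U : Set G, S = {H : Subgroup G | ((H : Set G) ∩ U).Nonempty}})

/-- `Sub^c_G`: the set of cyclic subgroups of a (discrete) group `G`. -/
def cyclicSubgroups (G : Type*) [Group G] : Set (Subgroup G) :=
  {H : Subgroup G | ∃ x : G, H = Subgroup.zpowers x}

/-- `Sub^a_G`: the set of abelian subgroups of a (discrete) group `G`. -/
def abelianSubgroups (G : Type*) [Group G] : Set (Subgroup G) :=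
  {H : Subgroup G | ∀ a ∈ H, ∀ b ∈ H, a * b = b * a}

/-- The image of a subgroup under the `n`-th power (`n : ℤ`) of an automorphism. -/
def autMap {G : Type*} [Group G] (T : MulAut G) (n : ℤ) (H : Subgroup G) : Subgroup G :=
  Subgroup.map (T ^ n).toMonoidHom H

/-- The orbit of a pair of subgroups under the powers of an automorphism. -/
def orbitPairs {G : Type*} [Group G] (T : MulAut G) (A B : Subgroup G) :
    Set (Subgroup G × Subgroup G) :=
  Set.range fun n : ℤ => (autMap T n A, autMap T n B)

/-- The automorphism `T` acts distally on the (`T`-invariant) subset `Y` of `Sub_G`: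
for distinct `A, B ∈ Y`, the closure of the orbit of `(A, B)` does not meet
the diagonal of `Y`. -/
def ActsDistallyOn {G : Type*} [Group G] (T : MulAut G) (Y : Set (Subgroup G)) : Prop :=
  ∀ A ∈ Y, ∀ B ∈ Y, A ≠ B → ∀ C ∈ Y, (C, C) ∉ closure (orbitPairs T A B)

/-- The automorphism `T` acts expansively on the compact (`T`-invariant) subset `Y` of
`Sub_G`: there is a neighbourhood `W` of the diagonal (an entourage for the unique
uniformity of the compact Hausdorff space `Y`, equivalently `d < δ` for an expansivity
constant `δ` of a compatible metric `d`) such that any two distinct points of `Y` are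
separated outside of `W` by some power of `T`. -/
def ActsExpansivelyOn {G : Type*} [Group G] (T : MulAut G) (Y : Set (Subgroup G)) : Prop :=
  ∃ W : Set (Subgroup G × Subgroup G), IsOpen W ∧ (∀ A ∈ Y, (A, A) ∈ W) ∧
    ∀ A ∈ Y, ∀ B ∈ Y, A ≠ B → ∃ n : ℤ, (autMap T n A, autMap T n B) ∉ W

/-- An automorphism `T` of a discrete group `G` belongs to class (NC) if for every
nontrivial cyclic subgroup `A` of `G`, no sequence `T^{n_k}(A)` converges to the trivial
subgroup in the Chabauty topology. -/
def ClassNC {G : Type*} [Group G] (T : MulAut G) : Prop :=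
  ∀ A ∈ cyclicSubgroups G, A ≠ ⊥ →
    ∀ n : ℕ → ℤ, ¬ Filter.Tendsto (fun k => autMap T (n k) A) Filter.atTop (nhds ⊥)

/-- A group is polycyclic if it has a finite subnormal series with cyclic quotients. -/
def IsPolycyclic (G : Type*) [Group G] : Prop :=
  ∃ (k : ℕ) (s : Fin (k + 1) → Subgroup G),
    s 0 = ⊤ ∧ s (Fin.last k) = ⊥ ∧
    ∀ i : Fin k, s i.succ ≤ s i.castSucc ∧
      ∃ hn : ((s i.succ).subgroupOf (s i.castSucc)).Normal,
        haveI := hn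
        IsCyclic (↥(s i.castSucc) ⧸ (s i.succ).subgroupOf (s i.castSucc))

/-!
The point is that distality on the cyclic subgroups forces every `x : G` to be `T`-periodic. The
periodic points form a subgroup `P`, and since `⟨x⟩ ⊓ P` is cyclic, some power `T ^ p` with `p ≠ 0`
fixes it pointwise. A point `c ∉ P` lies in `T ^ n ⟨x⟩` for only finitely many `n`: the points
`T ^ (-n) c` are pairwise distinct, but `⟨x⟩` meets each orbit of automorphisms in a finite set,
because in a polycyclic group an element of infinite order is an `m`-th power for only finitely
many `m`. Hence `T ^ (p * n) ⟨x⟩` converges to `⟨x⟩ ⊓ P`, which itself does not move, and distality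
gives `⟨x⟩ = ⟨x⟩ ⊓ P`. Finite generation turns periodicity of every point into finite order of `T`.
-/

open Filter Topology Pointwise

section Polycyclic

universe u

theorem IsPolycyclic.induction_of_extension {P : ∀ (G : Type u) [Group G], Prop}
    (of_subsingleton : ∀ (G : Type u) [Group G] [Subsingleton G], P G)
    (of_extension : ∀ {N E Q : Type u} [Group N] [Group E] [Group Q] [IsCyclic Q],
      GroupExtension N E Q → P N → P E)
    {G : Type u} [Group G] (hG : IsPolycyclic G) : P G := by
  obtain ⟨k, s, hs_zero, hs_last, hs⟩ := hG
  have P_series : ∀ i, P (s i) := by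
    intro i
    induction i using Fin.reverseInduction with
    | last => rw [hs_last]; exact of_subsingleton _
    | cast i ih =>
      obtain ⟨hle, _, _⟩ := hs i
      refine of_extension (Q := s i.castSucc ⧸ (s i.succ).subgroupOf (s i.castSucc))
        { inl := Subgroup.inclusion hle
          rightHom := QuotientGroup.mk' _
          inl_injective := Subgroup.inclusion_injective hle
          range_inl_eq_ker_rightHom := ?_
          rightHom_surjective := QuotientGroup.mk'_surjective _ } ih
      rw [Subgroup.inclusion_range, QuotientGroup.ker_mk']
  -- `G` is the middle term of the extension `1 → s 0 → G → 1 → 1`.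
  refine of_extension (Q := PUnit)
    { inl := (s 0).subtype
      rightHom := 1
      inl_injective := (s 0).subtype_injective
      range_inl_eq_ker_rightHom := ?_
      rightHom_surjective := Function.surjective_to_subsingleton _ } (P_series 0)
  rw [Subgroup.range_subtype, hs_zero, MonoidHom.ker_one]

end Polycyclic

section FinitelyGenerated

variable {G G' : Type*} [Group G] [Group G']

theorem subgroup_fg_map {H : Subgroup G} (hH : H.FG) (f : G →* G') : (H.map f).FG := by
  classical
  obtain ⟨S, rfl⟩ := hH
  exact ⟨S.image f, by rw [Finset.coe_image, MonoidHom.map_closure]⟩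

theorem subgroup_fg_of_isCyclic (H : Subgroup G) [IsCyclic H] : H.FG := by
  obtain ⟨x, rfl⟩ := H.isCyclic_iff_exists_zpowers_eq_top.mp ‹_›
  exact ⟨{x}, by rw [Finset.coe_singleton, Subgroup.zpowers_eq_closure]⟩

theorem subgroup_fg_of_fg_map_of_fg_inf_ker {H : Subgroup G} (f : G →* G')
    (hmap : (H.map f).FG) (hker : (H ⊓ f.ker).FG) : H.FG := by
  classical
  obtain ⟨T, hT⟩ := hmap
  have hT_image : (T : Set G') ⊆ f '' H := by
    rw [← Subgroup.coe_map, ← hT]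
    exact Subgroup.subset_closure
  obtain ⟨S, hSH, rfl⟩ := Finset.subset_set_image_iff.mp hT_image
  have hclosure : Subgroup.closure (S : Set G) ≤ H := (Subgroup.closure_le H).mpr hSH
  rw [Finset.coe_image, ← MonoidHom.map_closure] at hT
  suffices H = Subgroup.closure (S : Set G) ⊔ H ⊓ f.ker by
    rw [this]
    exact Subgroup.FG.sup ⟨S, rfl⟩ hker
  refine le_antisymm (fun x hx => ?_) (sup_le hclosure inf_le_left)
  obtain ⟨y, hy, hyx⟩ : f x ∈ (Subgroup.closure (S : Set G)).map f :=
    hT ▸ Subgroup.mem_map_of_mem f hx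
  have hker_mem : y⁻¹ * x ∈ H ⊓ f.ker :=
    ⟨H.mul_mem (H.inv_mem (hclosure hy)) hx, MonoidHom.eq_iff f |>.mp hyx.symm⟩
  simpa only [mul_inv_cancel_left] using Subgroup.mul_mem_sup hy hker_mem

theorem subgroup_fg_of_extension {N E Q : Type*} [Group N] [Group E] [Group Q]
    (S : GroupExtension N E Q) (hN : ∀ H : Subgroup N, H.FG) (hQ : ∀ H : Subgroup Q, H.FG)
    (H : Subgroup E) : H.FG := by
  refine subgroup_fg_of_fg_map_of_fg_inf_ker S.rightHom (hQ _) ?_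
  rw [← S.range_inl_eq_ker_rightHom, inf_comm, ← Subgroup.map_comap_eq]
  exact subgroup_fg_map (hN _) S.inl

theorem IsPolycyclic.subgroup_fg (hG : IsPolycyclic G) (H : Subgroup G) : H.FG :=
  hG.induction_of_extension (P := fun G _ => ∀ H : Subgroup G, H.FG)
    (fun _ _ _ H => subgroup_fg_of_isCyclic H)
    (fun S hN => subgroup_fg_of_extension S hN fun H => subgroup_fg_of_isCyclic H) H

end FinitelyGenerated

section Roots

/-- The set of exponents `m : ℤ` for which `c` has an `m`-th root in the group `G`. -/
def rootDegrees {G : Type*} [Group G] (c : G) : Set ℤ :=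
  {m | ∃ y : G, y ^ m = c}

/-- A group has finite root degrees if each of its elements of infinite order has an `m`-th root
for only finitely many `m : ℤ`. Elements of finite order are excluded: they are `m`-th powers for
all `m` prime to their order. -/
def HasFiniteRootDegrees (G : Type*) [Group G] : Prop :=
  ∀ c : G, ¬ IsOfFinOrder c → (rootDegrees c).Finite

variable {G : Type*} [Group G]

theorem isOfFinOrder_of_zpow {x : G} {m : ℤ} (hm : m ≠ 0) (hx : IsOfFinOrder (x ^ m)) :
    IsOfFinOrder x := by
  obtain ⟨n, hn, hxn⟩ := isOfFinOrder_iff_zpow_eq_one.mp hx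
  exact isOfFinOrder_iff_zpow_eq_one.mpr ⟨m * n, mul_ne_zero hm hn, by rw [zpow_mul, hxn]⟩

theorem ne_zero_of_mem_rootDegrees {c : G} (hc : ¬ IsOfFinOrder c) {m : ℤ}
    (hm : m ∈ rootDegrees c) : m ≠ 0 := by
  rintro rfl
  obtain ⟨y, rfl⟩ := hm
  exact hc (zpow_zero y ▸ IsOfFinOrder.one)

theorem hasFiniteRootDegrees_of_isCyclic [IsCyclic G] : HasFiniteRootDegrees G := by
  intro c hc
  obtain ⟨g, hg⟩ := IsCyclic.exists_generator (α := G)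
  obtain ⟨j, rfl⟩ := Subgroup.mem_zpowers_iff.mp (hg c)
  have hj : j ≠ 0 := by
    rintro rfl
    exact hc (zpow_zero g ▸ IsOfFinOrder.one)
  have hg_inj : Function.Injective fun n : ℤ => g ^ n :=
    injective_zpow_iff_not_isOfFinOrder.mpr fun h => hc h.zpow
  refine j.divisors.finite_toSet.subset ?_
  rintro m ⟨y, hy⟩
  obtain ⟨i, rfl⟩ := Subgroup.mem_zpowers_iff.mp (hg y)
  rw [← zpow_mul] at hy
  exact Int.mem_divisors.mpr ⟨Dvd.intro_left i (hg_inj hy), hj⟩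

theorem exists_forall_isOfFinOrder_pow_eq_one_of_isCyclic [IsCyclic G] :
    ∃ e : ℕ, e ≠ 0 ∧ ∀ x : G, IsOfFinOrder x → x ^ e = 1 := by
  obtain ⟨g, hg⟩ := IsCyclic.exists_generator (α := G)
  by_cases hg_fin : IsOfFinOrder g
  · exact ⟨orderOf g, hg_fin.orderOf_pos.ne', fun x _ =>
      orderOf_dvd_iff_pow_eq_one.mp (orderOf_dvd_of_mem_zpowers (hg x))⟩
  · refine ⟨1, one_ne_zero, fun x hx => ?_⟩
    obtain ⟨j, rfl⟩ := Subgroup.mem_zpowers_iff.mp (hg x)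
    obtain rfl : j = 0 := by_contra fun hj => hg_fin (isOfFinOrder_of_zpow hj hx)
    rw [zpow_zero, one_pow]

theorem hasFiniteRootDegrees_of_extension {N E Q : Type*} [Group N] [Group E] [Group Q]
    (S : GroupExtension N E Q) (hN : HasFiniteRootDegrees N) (hQ : HasFiniteRootDegrees Q)
    {e : ℕ} (he : e ≠ 0) (hQ_torsion : ∀ q : Q, IsOfFinOrder q → q ^ e = 1) :
    HasFiniteRootDegrees E := by
  intro c hc
  have exists_inl_eq_pow : ∀ x : E, IsOfFinOrder (S.rightHom x) → ∃ n, S.inl n = x ^ e := by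
    intro x hx
    rw [← MonoidHom.mem_range, S.range_inl_eq_ker_rightHom, MonoidHom.mem_ker, map_pow,
      hQ_torsion _ hx]
  by_cases hc_right : IsOfFinOrder (S.rightHom c)
  · -- Each `m`-th root `y` of `c` has `y ^ e ∈ N`, and `y ^ e` is an `m`-th root of `c ^ e`.
    obtain ⟨n, hn⟩ := exists_inl_eq_pow c hc_right
    have hn_inf : ¬ IsOfFinOrder n := by
      rw [← S.inl_injective.isOfFinOrder_iff, hn]
      exact fun h => hc (h.of_pow he)
    refine (hN n hn_inf).subset fun m hm => ?_
    have hm_ne := ne_zero_of_mem_rootDegrees hc hm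
    obtain ⟨y, rfl⟩ := hm
    rw [map_zpow] at hc_right
    obtain ⟨z, hz⟩ := exists_inl_eq_pow y (isOfFinOrder_of_zpow hm_ne hc_right)
    exact ⟨z, S.inl_injective (by rw [map_zpow, hz, hn, ← zpow_natCast, ← zpow_natCast, zpow_comm])⟩
  · refine (hQ _ hc_right).subset ?_
    rintro m ⟨y, rfl⟩
    exact ⟨S.rightHom y, (map_zpow _ _ _).symm⟩

theorem IsPolycyclic.hasFiniteRootDegrees (hG : IsPolycyclic G) : HasFiniteRootDegrees G := by
  refine hG.induction_of_extension (P := HasFiniteRootDegrees)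
    (fun _ _ _ => hasFiniteRootDegrees_of_isCyclic) ?_
  intro N E Q _ _ _ _ S hN
  obtain ⟨e, he, hQ_torsion⟩ := exists_forall_isOfFinOrder_pow_eq_one_of_isCyclic (G := Q)
  exact hasFiniteRootDegrees_of_extension S hN hasFiniteRootDegrees_of_isCyclic he hQ_torsion

theorem HasFiniteRootDegrees.finite_orbit_inter_zpowers (hG : HasFiniteRootDegrees G) (c x : G) :
    (MulAction.orbit (MulAut G) c ∩ Subgroup.zpowers x).Finite := by
  by_cases hx : IsOfFinOrder x
  · exact (finite_zpowers.mpr hx).subset Set.inter_subset_right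
  by_cases hc : IsOfFinOrder c
  · refine (Set.finite_singleton 1).subset ?_
    rintro _ ⟨⟨S, rfl⟩, hS⟩
    obtain ⟨m, hm⟩ := Subgroup.mem_zpowers_iff.mp hS
    have hxm : IsOfFinOrder (x ^ m) := hm ▸ S.toMonoidHom.isOfFinOrder hc
    obtain rfl : m = 0 := by_contra fun h => hx (isOfFinOrder_of_zpow h hxm)
    exact hm ▸ zpow_zero x
  · refine ((hG c hc).image (x ^ ·)).subset ?_
    rintro _ ⟨⟨S, rfl⟩, hS⟩
    obtain ⟨m, hm⟩ := Subgroup.mem_zpowers_iff.mp hS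
    exact ⟨m, ⟨S⁻¹ • x, by rw [← smul_zpow', hm, inv_smul_smul]⟩, hm⟩

end Roots

section Chabauty

variable {G : Type*} [Group G]

theorem isClopen_setOf_mem (x : G) : IsClopen {H : Subgroup G | x ∈ H} := by
  refine ⟨isOpen_compl_iff.mp ?_, ?_⟩ <;>
    apply TopologicalSpace.isOpen_generateFrom_of_mem
  · exact Or.inl ⟨{x}, Set.finite_singleton x, by ext; simp⟩
  · exact Or.inr ⟨{x}, by ext; simp⟩

instance totallySeparatedSpace_subgroup : TotallySeparatedSpace (Subgroup G) := by
  refine totallySeparatedSpace_iff_exists_isClopen.mpr fun A B hAB => ?_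
  obtain ⟨x, hx⟩ := not_forall.mp (mt SetLike.ext hAB)
  by_cases hxA : x ∈ A
  · exact ⟨_, isClopen_setOf_mem x, hxA, fun hxB => hx (iff_of_true hxA hxB)⟩
  · exact ⟨_, (isClopen_setOf_mem x).compl, hxA, fun hxB => hx (iff_of_false hxA hxB)⟩

theorem tendsto_nhds_of_forall_eventually_mem_iff {α : Type*} {l : Filter α}
    {F : α → Subgroup G} {H : Subgroup G} (hF : ∀ x, ∀ᶠ a in l, (x ∈ F a ↔ x ∈ H)) :
    Tendsto F l (𝓝 H) := by
  rw [TopologicalSpace.tendsto_nhds_generateFrom_iff]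
  rintro _ (⟨K, hK, rfl⟩ | ⟨U, rfl⟩) hH
  · filter_upwards [(eventually_all_finite hK).mpr fun x _ => hF x] with a ha
    refine Set.eq_empty_of_forall_notMem fun x hx => ?_
    exact (Set.mem_empty_iff_false x).mp (hH ▸ ⟨(ha x hx.2).mp hx.1, hx.2⟩)
  · obtain ⟨x, hxH, hxU⟩ := hH
    filter_upwards [hF x] with a ha using ⟨x, ha.mpr hxH, hxU⟩

theorem eventually_le_nhds_of_fg {H : Subgroup G} (hH : H.FG) : ∀ᶠ K in 𝓝 H, H ≤ K := by
  obtain ⟨S, rfl⟩ := hH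
  simp only [Subgroup.closure_le]
  exact (eventually_all_finset S).mpr fun x hx =>
    (isClopen_setOf_mem x).isOpen.mem_nhds (Subgroup.subset_closure hx)

theorem isClosed_of_isLowerSet_of_forall_fg {Y : Set (Subgroup G)} (hY : IsLowerSet Y)
    (hfg : ∀ H : Subgroup G, H.FG) : IsClosed Y := by
  refine isClosed_iff_frequently.mpr fun H hH => ?_
  obtain ⟨K, hKY, hHK⟩ := (hH.and_eventually (eventually_le_nhds_of_fg (hfg H))).exists
  exact hY hHK hKY

end Chabauty

section CyclicSubgroups

variable {G : Type*} [Group G]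

theorem mem_cyclicSubgroups_iff {H : Subgroup G} : H ∈ cyclicSubgroups G ↔ IsCyclic H := by
  rw [Subgroup.isCyclic_iff_exists_zpowers_eq_top]
  exact exists_congr fun _ => eq_comm

theorem isLowerSet_cyclicSubgroups : IsLowerSet (cyclicSubgroups G) := by
  intro H K hKH hH
  rw [mem_cyclicSubgroups_iff] at hH ⊢
  exact Subgroup.isCyclic_of_le hKH

theorem cyclicSubgroups_subset_abelianSubgroups : cyclicSubgroups G ⊆ abelianSubgroups G := by
  rintro _ ⟨x, rfl⟩ a ha b hb
  exact setLike_mul_comm ha hb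

end CyclicSubgroups

section PeriodicPoints

variable {G : Type*} [Group G]

/-- The subgroup of the points of `G` that are periodic under the automorphism `T`.
`MulAction.period` takes the value `0` exactly at the points that are not periodic. -/
def periodicSubgroup (T : MulAut G) : Subgroup G where
  carrier := {x | MulAction.period T x ≠ 0}
  one_mem' := by
    refine ne_zero_of_dvd_ne_zero one_ne_zero (MulAction.pow_smul_eq_iff_period_dvd.mp ?_)
    exact smul_one _
  inv_mem' {x} hx := by
    refine ne_zero_of_dvd_ne_zero hx (MulAction.pow_smul_eq_iff_period_dvd.mp ?_)
    rw [smul_inv', MulAction.pow_period_smul]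
  mul_mem' {x y} hx hy := by
    refine ne_zero_of_dvd_ne_zero (mul_ne_zero hx hy) (MulAction.pow_smul_eq_iff_period_dvd.mp ?_)
    rw [smul_mul', MulAction.pow_smul_eq_iff_period_dvd.mpr (dvd_mul_right _ _),
      MulAction.pow_smul_eq_iff_period_dvd.mpr (dvd_mul_left _ _)]

theorem mem_periodicSubgroup_iff {T : MulAut G} {x : G} :
    x ∈ periodicSubgroup T ↔ MulAction.period T x ≠ 0 :=
  Iff.rfl

theorem period_zpow_smul {Γ α : Type*} [Group Γ] [MulAction Γ α] (g : Γ) (n : ℤ) (a : α) :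
    MulAction.period g (g ^ n • a) = MulAction.period g a := by
  refine Nat.dvd_right_iff_eq.mp fun k => ?_
  rw [← MulAction.pow_smul_eq_iff_period_dvd, ← MulAction.pow_smul_eq_iff_period_dvd, smul_smul,
    ((Commute.refl g).pow_left k).zpow_right n, mul_smul, smul_left_cancel_iff]

theorem zpow_mul_smul_eq_self {Γ α : Type*} [Group Γ] [MulAction Γ α] {g : Γ} {p : ℤ} {a : α}
    (h : g ^ p • a = a) (n : ℤ) : g ^ (p * n) • a = a :=
  MulAction.zpow_smul_eq_iff_period_dvd.mpr <|
    dvd_mul_of_dvd_left (MulAction.zpow_smul_eq_iff_period_dvd.mp h) n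

theorem zpow_smul_periodicSubgroup (T : MulAut G) (n : ℤ) :
    T ^ n • periodicSubgroup T = periodicSubgroup T := by
  ext x
  rw [Subgroup.mem_pointwise_smul_iff_inv_smul_mem, ← zpow_neg, mem_periodicSubgroup_iff,
    period_zpow_smul, mem_periodicSubgroup_iff]

theorem exists_pow_smul_eq_self_of_fg {T : MulAut G} {H : Subgroup G} (hfg : H.FG)
    (hH : H ≤ periodicSubgroup T) : ∃ p : ℕ, p ≠ 0 ∧ ∀ x ∈ H, T ^ p • x = x := by
  obtain ⟨S, rfl⟩ := hfg
  rw [Subgroup.closure_le] at hH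
  refine ⟨∏ x ∈ S, MulAction.period T x, Finset.prod_ne_zero_iff.mpr fun x hx => hH hx, ?_⟩
  intro x hx
  induction hx using Subgroup.closure_induction with
  | mem x hx =>
    exact MulAction.pow_smul_eq_iff_period_dvd.mpr (Finset.dvd_prod_of_mem _ hx)
  | one => exact smul_one _
  | mul x y _ _ hx hy => rw [smul_mul', hx, hy]
  | inv x _ hx => rw [smul_inv', hx]

theorem injective_zpow_smul_of_notMem_periodicSubgroup {T : MulAut G} {c : G}
    (hc : c ∉ periodicSubgroup T) : Function.Injective fun n : ℤ => T ^ n • c := by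
  intro m n hmn
  have hperiod : MulAction.period T c = 0 := not_not.mp hc
  have hfix : T ^ (m - n) • c = c := by
    rw [sub_eq_neg_add, zpow_add, mul_smul, zpow_neg, inv_smul_eq_iff]
    exact hmn
  rw [MulAction.zpow_smul_eq_iff_period_dvd, hperiod, Nat.cast_zero, zero_dvd_iff] at hfix
  exact sub_eq_zero.mp hfix

theorem HasFiniteRootDegrees.finite_setOf_mem_zpow_smul_zpowers (hG : HasFiniteRootDegrees G)
    {T : MulAut G} {c : G} (hc : c ∉ periodicSubgroup T) (x : G) :
    {n : ℤ | c ∈ T ^ n • Subgroup.zpowers x}.Finite := by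
  refine (hG.finite_orbit_inter_zpowers c x).of_injOn (f := fun n : ℤ => T ^ (-n) • c) ?_ ?_
  · intro n hn
    rw [Set.mem_ofPred_eq, Subgroup.mem_pointwise_smul_iff_inv_smul_mem, ← zpow_neg] at hn
    exact ⟨MulAction.mem_orbit c _, hn⟩
  · exact ((injective_zpow_smul_of_notMem_periodicSubgroup hc).comp neg_injective).injOn

theorem HasFiniteRootDegrees.tendsto_zpow_smul_zpowers (hG : HasFiniteRootDegrees G)
    {T : MulAut G} {x : G} {p : ℤ} (hp : p ≠ 0)
    (hfix : T ^ p • (Subgroup.zpowers x ⊓ periodicSubgroup T) =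
      Subgroup.zpowers x ⊓ periodicSubgroup T) :
    Tendsto (fun n : ℤ => T ^ (p * n) • Subgroup.zpowers x) cofinite
      (𝓝 (Subgroup.zpowers x ⊓ periodicSubgroup T)) := by
  refine tendsto_nhds_of_forall_eventually_mem_iff fun c => ?_
  by_cases hc : c ∈ periodicSubgroup T
  · refine Eventually.of_forall fun n => ?_
    rw [← zpow_mul_smul_eq_self hfix n, Subgroup.smul_inf, zpow_smul_periodicSubgroup,
      Subgroup.mem_inf, and_iff_left hc]
  · have hescape : ∀ᶠ n : ℤ in cofinite, c ∉ T ^ n • Subgroup.zpowers x :=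
      eventually_cofinite.mpr (by simpa only [not_not] using
        hG.finite_setOf_mem_zpow_smul_zpowers hc x)
    filter_upwards [(mul_right_injective₀ hp).tendsto_cofinite.eventually hescape] with n hn
    exact iff_of_false hn fun h => hc h.2

end PeriodicPoints

section Distal

variable {G : Type*} [Group G] {T : MulAut G}

theorem autMap_eq_smul (T : MulAut G) (n : ℤ) (H : Subgroup G) : autMap T n H = T ^ n • H :=
  rfl

theorem ActsDistallyOn.mono {Y Z : Set (Subgroup G)} (hYZ : Y ⊆ Z) (hZ : ActsDistallyOn T Z) :
    ActsDistallyOn T Y :=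
  fun A hA B hB hAB C hC => hZ A (hYZ hA) B (hYZ hB) hAB C (hYZ hC)

theorem ActsDistallyOn.eq_of_tendsto {Y : Set (Subgroup G)} (hT : ActsDistallyOn T Y)
    {A B C : Subgroup G} (hA : A ∈ Y) (hB : B ∈ Y) (hC : C ∈ Y) {α : Type*} {l : Filter α} [NeBot l]
    {k : α → ℤ} (hAC : Tendsto (fun a => autMap T (k a) A) l (𝓝 C))
    (hBC : Tendsto (fun a => autMap T (k a) B) l (𝓝 C)) : A = B := by
  by_contra hAB
  exact hT A hA B hB hAB C hC <|
    mem_closure_of_tendsto (hAC.prodMk_nhds hBC) (Eventually.of_forall fun a => ⟨k a, rfl⟩)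

theorem actsDistallyOn_of_isOfFinOrder (hT : IsOfFinOrder T) (Y : Set (Subgroup G)) :
    ActsDistallyOn T Y := by
  intro A _ B _ hAB C _ hC
  have horbit : (orbitPairs T A B).Finite := by
    refine ((finite_zpowers.mpr hT).image fun S => (S • A, S • B)).subset ?_
    rintro _ ⟨n, rfl⟩
    exact ⟨T ^ n, ⟨n, rfl⟩, rfl⟩
  rw [horbit.isClosed.closure_eq] at hC
  obtain ⟨n, hn⟩ := hC
  rw [Prod.mk.injEq, autMap_eq_smul, autMap_eq_smul] at hn
  exact hAB (smul_left_cancel _ (hn.1.trans hn.2.symm))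

theorem ActsDistallyOn.periodicSubgroup_eq_top (hT : ActsDistallyOn T (cyclicSubgroups G))
    (hG : HasFiniteRootDegrees G) : periodicSubgroup T = ⊤ := by
  refine eq_top_iff.mpr fun x _ => ?_
  set C := Subgroup.zpowers x ⊓ periodicSubgroup T
  have hx_cyclic : Subgroup.zpowers x ∈ cyclicSubgroups G := ⟨x, rfl⟩
  have hC_cyclic : C ∈ cyclicSubgroups G := isLowerSet_cyclicSubgroups inf_le_left hx_cyclic
  have hC_fg : C.FG := by
    have := mem_cyclicSubgroups_iff.mp hC_cyclic
    exact subgroup_fg_of_isCyclic C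
  obtain ⟨p, hp, hp_fix⟩ := exists_pow_smul_eq_self_of_fg hC_fg inf_le_right
  have hC_smul : T ^ (p : ℤ) • C = C := by
    rw [zpow_natCast]
    exact SetLike.coe_injective ((Set.image_congr hp_fix).trans (Set.image_id' _))
  have hxC : Subgroup.zpowers x = C :=
    hT.eq_of_tendsto (k := fun n : ℤ => p * n) hx_cyclic hC_cyclic hC_cyclic
      (hG.tendsto_zpow_smul_zpowers (Nat.cast_ne_zero.mpr hp) hC_smul)
      (by simp only [autMap_eq_smul, zpow_mul_smul_eq_self hC_smul, tendsto_const_nhds])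
  exact inf_eq_left.mp hxC.symm (Subgroup.mem_zpowers x)

theorem isOfFinOrder_of_periodicSubgroup_eq_top [Group.FG G] (hT : periodicSubgroup T = ⊤) :
    IsOfFinOrder T := by
  obtain ⟨p, hp, hfix⟩ := exists_pow_smul_eq_self_of_fg (Group.fg_def.mp ‹_›) hT.ge
  exact isOfFinOrder_iff_pow_eq_one.mpr
    ⟨p, Nat.pos_of_ne_zero hp, MulEquiv.ext fun x => hfix x (Subgroup.mem_top x)⟩

end Distal

theorem polycyclic_distal_tfae_general {G : Type*} [Group G] (hfg : ∀ H : Subgroup G, H.FG)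
    (hroots : HasFiniteRootDegrees G) (T : MulAut G) :
    IsClosed (cyclicSubgroups G) ∧
    List.TFAE [ActsDistallyOn T (cyclicSubgroups G),
      ActsDistallyOn T (abelianSubgroups G),
      ActsDistallyOn T (Set.univ : Set (Subgroup G)),
      ∃ n : ℕ, 0 < n ∧ T ^ n = 1] := by
  have : Group.FG G := Group.fg_def.mpr (hfg ⊤)
  refine ⟨isClosed_of_isLowerSet_of_forall_fg isLowerSet_cyclicSubgroups hfg, ?_⟩
  rw [← isOfFinOrder_iff_pow_eq_one]
  tfae_have 1 → 4 := fun h => isOfFinOrder_of_periodicSubgroup_eq_top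
    (h.periodicSubgroup_eq_top hroots)
  tfae_have 4 → 3 := fun h => actsDistallyOn_of_isOfFinOrder h _
  tfae_have 3 → 2 := ActsDistallyOn.mono (Set.subset_univ _)
  tfae_have 2 → 1 := ActsDistallyOn.mono cyclicSubgroups_subset_abelianSubgroups
  tfae_finish

/-- for a discrete polycyclic group `G`, `Sub^c_G` is closed and the
distality of the `T`-action on `Sub^c_G`, `Sub^a_G`, `Sub_G` are all equivalent to `T`
having finite order. -/
theorem polycyclic_distal_tfae {G : Type*} [Group G] (hG : IsPolycyclic G)
    (T : MulAut G) :
    IsClosed (cyclicSubgroups G) ∧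
    List.TFAE [ActsDistallyOn T (cyclicSubgroups G),
      ActsDistallyOn T (abelianSubgroups G),
      ActsDistallyOn T (Set.univ : Set (Subgroup G)),
      ∃ n : ℕ, 0 < n ∧ T ^ n = 1] :=
  polycyclic_distal_tfae_general hG.subgroup_fg hG.hasFiniteRootDegrees T
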